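/- If N is a multiple of 4, a ≠ 0, and ε ≠ 0, then 0 is an eigenvalue of the Harper matrix h(a, 0, ε) of multiplicity exactly 2; that is, 0 is a root of the characteristic polynomial of h(a, 0, ε) of multiplicity exactly 2. -/

import Mathlib

open Matrix Complex

/-- The primitive `N`-th root of unity `ω = exp(2πi/N)`. -/
noncomputable def omegaN (N : ℕ) : ℂ := Complex.exp (2 * (Real.pi : ℂ) * Complex.I / (N : ℂ))

/-- The clock matrix `Z` with `Z_{jk} = ω^j` if `j = k`, `0` otherwise. -/
noncomputable def clockZ (N : ℕ) : Matrix (Fin N) (Fin N) ℂ :=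
  Matrix.diagonal fun j => omegaN N ^ (j : ℕ)

/-- The shift matrix `X` with `X_{jk} = 1` if `j = k + 1 (mod N)`, `0` otherwise. -/
def shiftX (N : ℕ) : Matrix (Fin N) (Fin N) ℂ :=
  Matrix.of fun j k => if (j : ℕ) = ((k : ℕ) + 1) % N then 1 else 0

/-- The shifted Harper matrix
`h(a,b,ε) = (a/2)·e^{ib}·X + (a/2)·e^{−ib}·Xᴴ + (ε/2)·(Z + Zᴴ)`. -/
noncomputable def harper (N : ℕ) (a b ε : ℝ) : Matrix (Fin N) (Fin N) ℂ :=
  ((a : ℂ) / 2 * Complex.exp ((b : ℂ) * Complex.I)) • shiftX N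
  + ((a : ℂ) / 2 * Complex.exp (-(b : ℂ) * Complex.I)) • (shiftX N)ᴴ
  + ((ε : ℂ) / 2) • (clockZ N + (clockZ N)ᴴ)

/-- The parity matrix `P` with `P_{jk} = 1` if `j + k ≡ 0 (mod N)`, `0` otherwise. -/
def parityP (N : ℕ) : Matrix (Fin N) (Fin N) ℂ :=
  Matrix.of fun j k => if ((j : ℕ) + (k : ℕ)) % N = 0 then 1 else 0

/-- The discrete Fourier transform matrix `Q` with `Q_{jk} = ω^{jk}/√N`. -/
noncomputable def dftQ (N : ℕ) : Matrix (Fin N) (Fin N) ℂ :=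
  Matrix.of fun j k => omegaN N ^ ((j : ℕ) * (k : ℕ)) / (Real.sqrt N : ℂ)

/-- Multiplicity of zero for a Hermitian matrix is the nullity. -/
lemma hermitian_mult {n : ℕ} (A : Matrix (Fin n) (Fin n) ℂ) (hA : A.IsHermitian) :
    Polynomial.rootMultiplicity 0 A.charpoly = Module.finrank ℂ (LinearMap.ker A.mulVecLin) := by
  have h1 := LinearMap.finrank_range_add_finrank_ker A.mulVecLin
  have h2 : A.rank = Module.finrank ℂ (LinearMap.range A.mulVecLin) := rfl
  rw [← h2, hA.rank_eq_card_non_zero_eigs, Module.finrank_fin_fun, Fintype.card_subtype] at h1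
  rw [← Polynomial.count_roots, hA.roots_charpoly_eq_eigenvalues, Multiset.count_map]
  have h3 := Finset.card_filter_add_card_filter_not (s := (Finset.univ : Finset (Fin n)))
    (fun i => hA.eigenvalues i ≠ 0)
  rw [Finset.card_univ, Fintype.card_fin] at h3
  have h4 : Multiset.card (Multiset.filter
      (fun i => (0 : ℂ) = (RCLike.ofReal ∘ hA.eigenvalues) i) Finset.univ.val)
      = (Finset.univ.filter (fun i => ¬ (hA.eigenvalues i ≠ 0))).card := by
    rw [Finset.card_def, Finset.filter_val]
    congr 1
    apply Multiset.filter_congr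
    intro i _
    simp only [Function.comp_apply, not_not]
    rw [eq_comm]
    exact RCLike.ofReal_eq_zero
  rw [h4]
  omega

/-- Reflection symmetry of a solution around a zero of the potential. -/
lemma refl_sol (v q : ℕ → ℂ) (hv : ∀ n, v (n + 2) = - q (n + 1) * v (n + 1) - v n)
    (p : ℕ) (hp : q p = 0) (hq : ∀ k r, r + k = p → q (p + k) = - q r) :
    ∀ k r, r + k = p → v (p + k) = (-1) ^ k * v r := by
  intro k
  induction k using Nat.twoStepInduction with
  | zero => intro r hr; simp at hr; simp [hr]
  | one =>
    intro r hr
    subst hr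
    rw [hv r, hp]; ring
  | more k ih0 ih1 =>
    intro r hr
    have e0 := ih0 (r + 2) (by omega)
    have e1 := ih1 (r + 1) (by omega)
    have e2 := hq (k + 1) (r + 1) (by omega)
    have e3 := hv (p + k)
    rw [show p + (k + 2) = p + k + 2 by ring, e3, e0, show p + k + 1 = p + (k + 1) by ring, e1, e2,
      hv r]
    ring

/-- The potential. -/
noncomputable def qpot (w u c : ℂ) (n : ℕ) : ℂ := c * (w ^ n + u ^ n)

lemma qpot_refl (w u c : ℂ) (hwu : w * u = 1) (p : ℕ) (hp : w ^ p + u ^ p = 0) :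
    ∀ k r, r + k = p → qpot w u c (p + k) = - qpot w u c r := by
  intro k r hr
  subst hr
  have hk : w ^ k * u ^ k = 1 := by rw [← mul_pow, hwu, one_pow]
  unfold qpot
  have : w ^ (r + k + k) + u ^ (r + k + k) + (w ^ r + u ^ r)
      = (w ^ (r + k) + u ^ (r + k)) * (w ^ k + u ^ k) := by
    simp only [pow_add]
    linear_combination (-(w ^ r + u ^ r)) * hk
  rw [hp] at this
  linear_combination c * this

/-- All solutions are periodic. -/
lemma sol_periodic (w u c : ℂ) (m : ℕ) (hm : 1 ≤ m) (hw : w ^ m = I) (hu : u ^ m = -I)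
    (hwu : w * u = 1) (v : ℕ → ℂ)
    (hv : ∀ n, v (n + 2) = - qpot w u c (n + 1) * v (n + 1) - v n) :
    ∀ n, v (n + 4 * m) = v n := by
  have h1 : w ^ m + u ^ m = 0 := by rw [hw, hu]; ring
  have h3 : w ^ (3 * m) + u ^ (3 * m) = 0 := by
    rw [mul_comm, pow_mul, pow_mul, hw, hu]; ring
  have r1 := refl_sol v _ hv m (by simp [qpot, h1]) (qpot_refl w u c hwu m h1)
  have r3 := refl_sol v _ hv (3 * m) (by simp [qpot, h3]) (qpot_refl w u c hwu _ h3)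
  have sq : ((-1 : ℂ) ^ m) * (-1) ^ m = 1 := by rw [← mul_pow]; simp
  have hw4 : w ^ (4 * m) = 1 := by rw [mul_comm, pow_mul, hw]; exact Complex.I_pow_four
  have hu4 : u ^ (4 * m) = 1 := by
    rw [mul_comm, pow_mul, hu]; rw [Even.neg_pow (by decide)]; exact Complex.I_pow_four
  intro n
  induction n using Nat.twoStepInduction with
  | zero =>
    have a1 := r1 m 0 (by omega)
    have a3 := r3 m (2 * m) (by omega)
    rw [show m + m = 2 * m by ring] at a1
    rw [show 0 + 4 * m = 3 * m + m by ring, a3, a1]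
    linear_combination v 0 * sq
  | one =>
    obtain ⟨l, rfl⟩ : ∃ l, m = l + 1 := ⟨m - 1, by omega⟩
    have a1 := r1 l 1 (by omega)
    have a3 := r3 (l + 2) (2 * l + 1) (by omega)
    rw [show l + 1 + l = 2 * l + 1 by ring] at a1
    rw [show 1 + 4 * (l + 1) = 3 * (l + 1) + (l + 2) by ring, a3, a1]
    have sq' : ((-1 : ℂ) ^ l) * (-1) ^ l = 1 := by rw [← mul_pow]; simp
    rw [pow_add]
    linear_combination v 1 * sq'
  | more n ih0 ih1 =>
    have e := hv (n + 4 * m)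
    rw [show n + 4 * m + 1 = n + 1 + 4 * m by ring] at e
    rw [show n + 2 + 4 * m = n + 4 * m + 2 by ring, e, ih0, ih1, hv n]
    simp [qpot, pow_add _ _ (4 * m), hw4, hu4]

/-- The recurrence solution with given initial values, as a pair. -/
noncomputable def solPair (q : ℕ → ℂ) (s t : ℂ) : ℕ → ℂ × ℂ
  | 0 => (s, t)
  | n + 1 => ((solPair q s t n).2, - q (n + 1) * (solPair q s t n).2 - (solPair q s t n).1)

lemma omegaN_pow (m : ℕ) (hm : 1 ≤ m) : omegaN (4 * m) ^ m = I := by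
  unfold omegaN
  rw [← Complex.exp_nat_mul]
  have : (m : ℂ) ≠ 0 := by exact_mod_cast (by omega : m ≠ 0)
  rw [show (m : ℂ) * (2 * (Real.pi : ℂ) * I / ((4 * m : ℕ) : ℂ)) = Real.pi / 2 * I by
    push_cast; field_simp; norm_num]
  exact Complex.exp_pi_div_two_mul_I

lemma star_omegaN (N : ℕ) : omegaN N * star (omegaN N) = 1 := by
  unfold omegaN
  rw [star_def, ← Complex.exp_conj, ← Complex.exp_add]
  have h2 : (starRingEnd ℂ) 2 = 2 := Complex.conj_ofNat 2
  simp only [map_div₀, map_mul, h2, Complex.conj_ofReal, Complex.conj_I, Complex.conj_natCast]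
  rw [← Complex.exp_zero]
  congr 1
  ring

/-- Rows of the Harper matrix. -/
lemma harper_row (N : ℕ) (hN : 2 ≤ N) (a ε : ℝ) (x : Fin N → ℂ) (j : Fin N) :
    (harper N a 0 ε *ᵥ x) j =
      (a : ℂ) / 2 * (x ⟨(j + N - 1) % N, Nat.mod_lt _ (by omega)⟩
        + x ⟨(j + 1) % N, Nat.mod_lt _ (by omega)⟩)
      + (ε : ℂ) / 2 * (omegaN N ^ (j : ℕ) + star (omegaN N) ^ (j : ℕ)) * x j := by
  have hX : (shiftX N *ᵥ x) j = x ⟨(j + N - 1) % N, Nat.mod_lt _ (by omega)⟩ := by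
    simp only [mulVec, dotProduct, shiftX, of_apply]
    rw [Finset.sum_eq_single ⟨(j + N - 1) % N, Nat.mod_lt _ (by omega)⟩]
    · rw [if_pos]
      · simp
      · have := j.2
        simp only [Nat.mod_add_mod]
        rw [show (j : ℕ) + N - 1 + 1 = j + N by omega]
        simp [Nat.mod_eq_of_lt this]
    · intro k _ hk
      rw [if_neg, zero_mul]
      intro h
      apply hk
      ext
      have := k.2
      simp only
      rw [h]
      by_cases hk' : (k : ℕ) + 1 = N
      · rw [hk', Nat.mod_self, Nat.mod_eq_of_lt] <;> omega
      · rw [Nat.mod_eq_of_lt (a := (k : ℕ) + 1) (by omega),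
          show (k : ℕ) + 1 + N - 1 = k + N by omega, Nat.add_mod_right, Nat.mod_eq_of_lt this]
    · simp
  have hXH : ((shiftX N)ᴴ *ᵥ x) j = x ⟨(j + 1) % N, Nat.mod_lt _ (by omega)⟩ := by
    simp only [mulVec, dotProduct, shiftX, of_apply, conjTranspose_apply]
    rw [Finset.sum_eq_single ⟨(j + 1) % N, Nat.mod_lt _ (by omega)⟩]
    · simp
    · intro k _ hk
      rw [if_neg]
      · simp
      · intro h
        exact hk (Fin.ext h)
    · simp
  unfold harper
  simp only [add_mulVec, smul_mulVec, Pi.add_apply, Pi.smul_apply, hX, hXH, clockZ,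
    diagonal_conjTranspose, mulVec_diagonal, smul_eq_mul]
  simp
  ring

lemma harper_herm (N : ℕ) (a ε : ℝ) : (harper N a 0 ε).IsHermitian := by
  unfold harper Matrix.IsHermitian
  simp [conjTranspose_add, conjTranspose_smul]
  abel

/-- If `N` is a multiple of `4`, `a ≠ 0`, and `ε ≠ 0`, then `0` is a root of the
characteristic polynomial of `h(a, 0, ε)` of multiplicity exactly `2`. -/
theorem harper_zero_eigenvalue_multiplicity_two (N : ℕ) (hN : 2 ≤ N) (hN4 : 4 ∣ N)
    (a ε : ℝ) (ha : a ≠ 0) (hε : ε ≠ 0) :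
    Polynomial.rootMultiplicity 0 (Matrix.charpoly (harper N a 0 ε)) = 2 := by
  rw [hermitian_mult _ (harper_herm N a ε)]
  have ha' : (a : ℂ) ≠ 0 := by exact_mod_cast ha
  let K := LinearMap.ker (harper N a 0 ε).mulVecLin
  let f : K →ₗ[ℂ] (ℂ × ℂ) :=
    ((LinearMap.proj (⟨0, by omega⟩ : Fin N)).prod
      (LinearMap.proj (⟨1, by omega⟩ : Fin N))).comp K.subtype
  have hinj : Function.Injective f := by
    rw [← LinearMap.ker_eq_bot, LinearMap.ker_eq_bot']
    rintro ⟨x, hx⟩ hfx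
    have h0 : x ⟨0, by omega⟩ = 0 := congrArg Prod.fst hfx
    have h1 : x ⟨1, by omega⟩ = 0 := congrArg Prod.snd hfx
    have hrow : ∀ j, (harper N a 0 ε *ᵥ x) j = 0 := fun j => congrFun hx j
    have key : ∀ n (hn : n < N), x ⟨n, hn⟩ = 0 := by
      intro n
      induction n using Nat.twoStepInduction with
      | zero => intro _; exact h0
      | one => intro _; exact h1
      | more n ih0 ih1 =>
        intro hn
        have e := hrow ⟨n + 1, by omega⟩
        rw [harper_row N hN] at e
        have i1 : (n + 1 + N - 1) % N = n := by
          rw [show n + 1 + N - 1 = n + N by omega, Nat.add_mod_right, Nat.mod_eq_of_lt (by omega)]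
        have i2 : (n + 1 + 1) % N = n + 2 := Nat.mod_eq_of_lt hn
        simp only [i1, i2, ih0 (by omega), ih1 (by omega)] at e
        simpa [ha'] using e
    ext j
    exact key j j.2
  have hsurj : Function.Surjective f := by
    rintro ⟨s, t⟩
    obtain ⟨m, rfl⟩ := hN4
    have hm : 1 ≤ m := by omega
    have hw := omegaN_pow m hm
    have hu : star (omegaN (4 * m)) ^ m = -I := by rw [← star_pow, hw]; simp
    have hwu := star_omegaN (4 * m)
    have hper := sol_periodic (omegaN (4 * m)) (star (omegaN (4 * m))) (ε / a) m hm hw hu hwu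
    generalize hq : qpot (omegaN (4 * m)) (star (omegaN (4 * m))) (ε / a) = q at hper
    let v : ℕ → ℂ := fun n => (solPair q s t n).1
    have hv : ∀ n, v (n + 2) = - q (n + 1) * v (n + 1) - v n := fun n => rfl
    have hp := hper v hv
    have hmod : ∀ n, v (n % (4 * m)) = v n := fun n => Function.Periodic.map_mod_nat hp n
    refine ⟨⟨fun j => v j, ?_⟩, rfl⟩
    change (harper (4 * m) a 0 ε) *ᵥ _ = 0
    ext j
    rw [harper_row _ hN]
    simp only [hmod, Pi.zero_apply]
    have hqp : q (j + 4 * m) = q j := by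
      rw [← hq]
      have hw4 : omegaN (4 * m) ^ (4 * m) = 1 := by
        rw [mul_comm 4 m, pow_mul, mul_comm m 4, hw]; simp
      have hu4 : star (omegaN (4 * m)) ^ (4 * m) = 1 := by
        rw [← star_pow, hw4]; simp
      simp only [qpot, pow_add, hw4, hu4, mul_one]
    have e := hv (j + 4 * m - 1)
    rw [show (j : ℕ) + 4 * m - 1 + 2 = j + 1 + 4 * m by omega,
      show (j : ℕ) + 4 * m - 1 + 1 = j + 4 * m by omega, hp, hp, hqp] at e
    rw [e, ← hq, qpot]
    field_simp
    ring
  have := (LinearEquiv.ofBijective f ⟨hinj, hsurj⟩).finrank_eq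
  rw [show Module.finrank ℂ (LinearMap.ker (harper N a 0 ε).mulVecLin) = Module.finrank ℂ K from rfl,
    this]
  simp
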